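/- Let Z and X be ordered Banach spaces and assume there exists a positive bounded linear bijection T : Z → X. If the cone of X is a face of its bidual wedge, then the cone of Z is also a face of its bidual wedge. -/

import Mathlib

/-- A wedge in a real vector space: a non-empty subset closed under addition and
under multiplication by non-negative scalars. -/
def IsWedge {V : Type*} [AddCommGroup V] [Module ℝ V] (W : Set V) : Prop :=
  W.Nonempty ∧ (∀ x ∈ W, ∀ y ∈ W, x + y ∈ W) ∧ (∀ a : ℝ, 0 ≤ a → ∀ x ∈ W, a • x ∈ W)

/-- `C` is a face of the wedge `W`: `C` is a subset of `W` which is itself a wedge and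
which contains the order interval `[0, w] = {y : y ∈ W ∧ w - y ∈ W}` for every `w ∈ C`. -/
def IsFaceOf {V : Type*} [AddCommGroup V] [Module ℝ V] (C W : Set V) : Prop :=
  C ⊆ W ∧ IsWedge C ∧ ∀ w ∈ C, ∀ y ∈ W, w - y ∈ W → y ∈ C

/-- The dual wedge of a subset `W` of a normed space, inside the topological dual. -/
def dualWedge {V : Type*} [NormedAddCommGroup V] [NormedSpace ℝ V] (W : Set V) :
    Set (V →L[ℝ] ℝ) := {f | ∀ x ∈ W, 0 ≤ f x}

/-!
Faces pull back along positive maps, so the elements of the bidual wedge of `Z` that `T''` sends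
into the cone of `X` form a face. A map `T` with a bounded left inverse is Tauberian: only elements
of `Z` are sent into `X` by `T''`. An element of `Z` in the bidual wedge of the closed cone `Z₊`
lies in `Z₊` by Hahn-Banach separation, so this face is exactly the cone of `Z`.
-/

theorem IsWedge.zero_mem {V : Type*} [AddCommGroup V] [Module ℝ V] {W : Set V} (hW : IsWedge W) :
    (0 : V) ∈ W := by
  obtain ⟨x, hx⟩ := hW.1
  simpa only [zero_smul] using hW.2.2 0 le_rfl x hx

/-- A closed wedge as a `ProperCone`, to make Mathlib's separation theorems available. -/
def IsWedge.toProperCone {V : Type*} [AddCommGroup V] [Module ℝ V] [TopologicalSpace V]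
    {W : Set V} (hW : IsWedge W) (hclosed : IsClosed W) : ProperCone ℝ V where
  carrier := W
  add_mem' hx hy := hW.2.1 _ hx _ hy
  zero_mem' := hW.zero_mem
  smul_mem' a x hx := hW.2.2 a a.2 x hx
  isClosed' := hclosed

theorem IsFaceOf.inter_preimage {V V' : Type*} [AddCommGroup V] [Module ℝ V]
    [AddCommGroup V'] [Module ℝ V'] {C W' : Set V'} {W : Set V} (hC : IsFaceOf C W')
    (hW : IsWedge W) (f : V →ₗ[ℝ] V') (hf : Set.MapsTo f W W') :
    IsFaceOf (W ∩ f ⁻¹' C) W := by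
  obtain ⟨-, hCwedge, hCface⟩ := hC
  refine ⟨Set.inter_subset_left, ⟨⟨0, hW.zero_mem, ?_⟩, ?_, ?_⟩, ?_⟩
  · simpa only [Set.mem_preimage, map_zero] using hCwedge.zero_mem
  · rintro x ⟨hxW, hxC⟩ y ⟨hyW, hyC⟩
    exact ⟨hW.2.1 x hxW y hyW, by
      simpa only [Set.mem_preimage, map_add] using hCwedge.2.1 _ hxC _ hyC⟩
  · rintro a ha x ⟨hxW, hxC⟩
    exact ⟨hW.2.2 a ha x hxW, by
      simpa only [Set.mem_preimage, map_smul] using hCwedge.2.2 a ha _ hxC⟩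
  · rintro w ⟨-, hwC⟩ y hyW hwy
    exact ⟨hyW, hCface _ hwC _ (hf hyW) (map_sub f w y ▸ hf hwy)⟩

section DualWedge

variable {V V' : Type*} [NormedAddCommGroup V] [NormedSpace ℝ V]
  [NormedAddCommGroup V'] [NormedSpace ℝ V']

theorem isWedge_dualWedge (W : Set V) : IsWedge (dualWedge W) :=
  ⟨⟨0, fun _ _ ↦ le_rfl⟩, fun _ hf _ hg x hx ↦ add_nonneg (hf x hx) (hg x hx),
    fun _ ha _ hf x hx ↦ mul_nonneg ha (hf x hx)⟩

theorem mapsTo_precomp_dualWedge {W : Set V} {W' : Set V'} {T : V →L[ℝ] V'}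
    (hT : Set.MapsTo T W W') : Set.MapsTo (T.precomp ℝ) (dualWedge W') (dualWedge W) :=
  fun _ hf _ hx ↦ hf _ (hT hx)

theorem inclusionInDoubleDual_mem_dualWedge_dualWedge_iff {W : Set V} (hW : IsWedge W)
    (hclosed : IsClosed W) {x : V} :
    NormedSpace.inclusionInDoubleDual ℝ V x ∈ dualWedge (dualWedge W) ↔ x ∈ W := by
  refine ⟨fun hx ↦ ?_, fun hx f hf ↦ hf x hx⟩
  by_contra hxW
  obtain ⟨f, hf, hfx⟩ := (hW.toProperCone hclosed).hyperplane_separation_point hxW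
  exact (hx f hf).not_gt hfx

end DualWedge

section Tauberian

variable {𝕜 E F G : Type*} [NontriviallyNormedField 𝕜]
  [SeminormedAddCommGroup E] [NormedSpace 𝕜 E] [SeminormedAddCommGroup F] [NormedSpace 𝕜 F]
  [SeminormedAddCommGroup G] [NormedSpace 𝕜 G]

/-- The second adjoint `T'' : E'' → F''` of a bounded operator `T : E → F`. -/
noncomputable def bidualMap (T : E →L[𝕜] F) :
    StrongDual 𝕜 (StrongDual 𝕜 E) →L[𝕜] StrongDual 𝕜 (StrongDual 𝕜 F) :=
  (T.precomp 𝕜).precomp 𝕜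

theorem bidualMap_inclusionInDoubleDual (T : E →L[𝕜] F) (x : E) :
    bidualMap T (NormedSpace.inclusionInDoubleDual 𝕜 E x) =
      NormedSpace.inclusionInDoubleDual 𝕜 F (T x) :=
  rfl

/-- A bounded operator `T : E → F` is Tauberian if `T'' φ ∈ F` implies `φ ∈ E`, the spaces being
identified with their canonical images in their biduals. -/
def IsTauberian (T : E →L[𝕜] F) : Prop :=
  ∀ φ, bidualMap T φ ∈ Set.range (NormedSpace.inclusionInDoubleDual 𝕜 F) →
    φ ∈ Set.range (NormedSpace.inclusionInDoubleDual 𝕜 E)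

theorem IsTauberian.id : IsTauberian (ContinuousLinearMap.id 𝕜 E) :=
  fun _ hφ ↦ hφ

theorem IsTauberian.of_comp {S : F →L[𝕜] G} {T : E →L[𝕜] F} (hST : IsTauberian (S ∘L T)) :
    IsTauberian T := by
  rintro φ ⟨y, hy⟩
  refine hST φ ⟨S y, ?_⟩
  calc NormedSpace.inclusionInDoubleDual 𝕜 G (S y)
      = bidualMap S (bidualMap T φ) := by rw [← hy, bidualMap_inclusionInDoubleDual]
    _ = bidualMap (S ∘L T) φ := rfl

theorem IsTauberian.of_hasLeftInverse {T : E →L[𝕜] F} (hT : T.HasLeftInverse) :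
    IsTauberian T := by
  obtain ⟨S, hST⟩ := hT
  have hid : S ∘L T = ContinuousLinearMap.id 𝕜 E := ContinuousLinearMap.ext hST
  exact .of_comp (hid ▸ IsTauberian.id)

theorem IsTauberian.of_bijective {E F : Type*} [NormedAddCommGroup E] [NormedSpace 𝕜 E]
    [CompleteSpace E] [NormedAddCommGroup F] [NormedSpace 𝕜 F] [CompleteSpace F] {T : E →L[𝕜] F}
    (hT : Function.Bijective T) : IsTauberian T := by
  let e : E ≃L[𝕜] F :=
    .ofBijective T (LinearMap.ker_eq_bot.2 hT.1) (LinearMap.range_eq_top.2 hT.2)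
  have he : (e : E →L[𝕜] F) = T := ContinuousLinearEquiv.coe_ofBijective T _ _
  exact .of_hasLeftInverse (he ▸ e.hasLeftInverse)

end Tauberian

section PositiveTauberian

variable {Z X : Type*} [NormedAddCommGroup Z] [NormedSpace ℝ Z]
  [NormedAddCommGroup X] [NormedSpace ℝ X]

theorem IsTauberian.image_inclusionInDoubleDual_eq {Zp : Set Z} (hZp : IsWedge Zp)
    (hclosed : IsClosed Zp) {Xp : Set X} {T : Z →L[ℝ] X} (hT : IsTauberian T)
    (hTpos : Set.MapsTo T Zp Xp) :
    NormedSpace.inclusionInDoubleDual ℝ Z '' Zp =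
      dualWedge (dualWedge Zp) ∩
        bidualMap T ⁻¹' (NormedSpace.inclusionInDoubleDual ℝ X '' Xp) := by
  ext φ
  constructor
  · rintro ⟨z, hz, rfl⟩
    exact ⟨(inclusionInDoubleDual_mem_dualWedge_dualWedge_iff hZp hclosed).2 hz,
      T z, hTpos hz, (bidualMap_inclusionInDoubleDual T z).symm⟩
  · rintro ⟨hφ, hTφ⟩
    obtain ⟨z, rfl⟩ := hT φ (Set.image_subset_range _ _ hTφ)
    exact ⟨z, (inclusionInDoubleDual_mem_dualWedge_dualWedge_iff hZp hclosed).1 hφ, rfl⟩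

theorem stmt_4_general {Zp : Set Z} (hZp : IsWedge Zp) (hclosed : IsClosed Zp) {Xp : Set X}
    {T : Z →L[ℝ] X} (hT : IsTauberian T) (hTpos : Set.MapsTo T Zp Xp)
    (hXface : IsFaceOf (NormedSpace.inclusionInDoubleDual ℝ X '' Xp) (dualWedge (dualWedge Xp))) :
    IsFaceOf (NormedSpace.inclusionInDoubleDual ℝ Z '' Zp) (dualWedge (dualWedge Zp)) := by
  rw [hT.image_inclusionInDoubleDual_eq hZp hclosed hTpos]
  exact hXface.inter_preimage (isWedge_dualWedge _) (bidualMap T).toLinearMap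
    (mapsTo_precomp_dualWedge (mapsTo_precomp_dualWedge hTpos))

end PositiveTauberian

/-- Let `Z` and `X` be ordered Banach spaces and assume there exists a positive bounded
linear bijection `T : Z → X`.  If the cone of `X` is a face of its bidual wedge, then
the cone of `Z` is also a face of its bidual wedge. -/
theorem stmt_4
    {Z X : Type*}
    [NormedAddCommGroup Z] [NormedSpace ℝ Z] [CompleteSpace Z]
    [NormedAddCommGroup X] [NormedSpace ℝ X] [CompleteSpace X]
    (Zp : Set Z) (hZclosed : IsClosed Zp) (hZ0 : (0 : Z) ∈ Zp)
    (hZadd : ∀ x ∈ Zp, ∀ y ∈ Zp, x + y ∈ Zp)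
    (hZsmul : ∀ a : ℝ, 0 ≤ a → ∀ x ∈ Zp, a • x ∈ Zp)
    (hZcone : ∀ z : Z, z ∈ Zp → -z ∈ Zp → z = 0)
    (Xp : Set X) (hXclosed : IsClosed Xp) (hX0 : (0 : X) ∈ Xp)
    (hXadd : ∀ x ∈ Xp, ∀ y ∈ Xp, x + y ∈ Xp)
    (hXsmul : ∀ a : ℝ, 0 ≤ a → ∀ x ∈ Xp, a • x ∈ Xp)
    (hXcone : ∀ x : X, x ∈ Xp → -x ∈ Xp → x = 0)
    (T : Z →L[ℝ] X)
    (hTpos : ∀ z ∈ Zp, T z ∈ Xp)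
    (hTbij : Function.Bijective T)
    (hXface : IsFaceOf ((NormedSpace.inclusionInDoubleDual ℝ X) '' Xp)
      (dualWedge (dualWedge Xp))) :
    IsFaceOf ((NormedSpace.inclusionInDoubleDual ℝ Z) '' Zp)
      (dualWedge (dualWedge Zp)) :=
  stmt_4_general ⟨⟨0, hZ0⟩, hZadd, hZsmul⟩ hZclosed (.of_bijective hTbij) hTpos hXface
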